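/- arXiv:1807.01192 — 3 statements merged into one kernel-verified Lean document; each statement's English description precedes it below -/
import Mathlib

section
/- Let W be a nontrivial finite-dimensional complex inner product space, and equip End(W) with the star operation given by the Hilbert-space adjoint. Then every star-algebra automorphism γ of End(W) is implemented by a unitary: there exists a unitary operator U on W such that γ(a) = U† ∘ a ∘ U for all a ∈ End(W). -/
/-!
In finite dimension every endomorphism is continuous, so `End(W)` and `W →L[ℂ] W` are the same
star algebra. Mathlib's `StarAlgEquiv.eq_linearIsometryEquivConjStarAlgEquiv` says that every
continuous star-automorphism of the latter has the form `a ↦ V ∘ a ∘ V⁻¹` for a surjective linear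
isometry `V`, and continuity is automatic because `End(W)` is itself finite-dimensional. The
required unitary is `U = V⁻¹`, whose adjoint is `V`.
-/

/-- In finite dimension, `End(W)` and the algebra of bounded operators on `W` agree as
star algebras. -/
noncomputable def endStarAlgEquivCLM (W : Type*) [NormedAddCommGroup W] [InnerProductSpace ℂ W]
    [FiniteDimensional ℂ W] : Module.End ℂ W ≃⋆ₐ[ℂ] (W →L[ℂ] W) :=
  StarAlgEquiv.ofAlgEquiv (Module.End.toContinuousLinearMap W) fun a => by
    change LinearMap.toContinuousLinearMap (LinearMap.adjoint a) =
      ContinuousLinearMap.adjoint (LinearMap.toContinuousLinearMap a)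
    exact LinearMap.adjoint_toContinuousLinearMap a |>.symm

/-- Every star-algebra automorphism of the algebra of endomorphisms of a
nontrivial finite-dimensional complex inner product space (with star given by
the Hilbert-space adjoint) is implemented by a unitary operator. -/
theorem starAlgAut_end_is_unitarily_implemented
    {W : Type*} [NormedAddCommGroup W] [InnerProductSpace ℂ W]
    [FiniteDimensional ℂ W] [Nontrivial W]
    (γ : Module.End ℂ W ≃⋆ₐ[ℂ] Module.End ℂ W) :
    ∃ U : Module.End ℂ W,
      (LinearMap.adjoint U * U = 1 ∧ U * LinearMap.adjoint U = 1) ∧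
      ∀ a : Module.End ℂ W, γ a = LinearMap.adjoint U * a * U := by
  have : CompleteSpace W := FiniteDimensional.complete ℂ W
  let e := endStarAlgEquivCLM W
  let f : (W →L[ℂ] W) ≃⋆ₐ[ℂ] (W →L[ℂ] W) := (e.symm.trans γ).trans e
  have hf : Continuous f :=
    LinearMap.continuous_of_finiteDimensional (f.toAlgEquiv.toLinearMap)
  obtain ⟨V, hV⟩ := StarAlgEquiv.eq_linearIsometryEquivConjStarAlgEquiv f hf
  have hadj : LinearMap.adjoint (V.symm.toLinearEquiv : W →ₗ[ℂ] W) =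
      (V.toLinearEquiv : W →ₗ[ℂ] W) := by
    symm
    rw [LinearMap.eq_adjoint_iff]
    intro x y
    simpa using V.inner_map_eq_flip x y
  refine ⟨(V.symm.toLinearEquiv : W →ₗ[ℂ] W), ⟨?_, ?_⟩, fun a => ?_⟩
  · rw [hadj]; ext x; simp
  · rw [hadj]; ext x; simp
  · rw [hadj]
    have h : e (γ a) = V.conjStarAlgEquiv (e a) := by
      rw [← hV]; simp [f]
    ext x
    exact congr($h x)
end

section
/- Let W be a nontrivial finite-dimensional complex inner product space, A a unital associative ℂ-algebra, and π : A → End(W) a unital ℂ-algebra homomorphism such that W is a simple module under the action of A through π. Let γ and μ be ℂ-algebra automorphisms of A satisfying μ ∘ γ ∘ μ⁻¹ = γ. Let τ be a unitary operator on W such that π(μ(b)) = τ ∘ π(b) ∘ τ⁻¹ for all b ∈ A, and let R be a unitary operator on W such that R† ∘ π(b) ∘ R = π(γ(b)) for all b ∈ A. Then there exists θ ∈ ℝ such that τ ∘ R ∘ τ⁻¹ = e^{iθ} R. -/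
/-!
Both `R` and `S = τ R τ†` satisfy `π b * X = X * π (γ b)`: for `S`, conjugating the relation for `R`
by `τ` replaces `γ` with `μ ∘ γ ∘ μ⁻¹ = γ`. Hence the unitary `S R†` commutes with the irreducible
family `π b`, so it is a scalar by Schur's lemma, and unitarity makes that scalar a phase.
-/

/-- Schur's lemma: an eigenspace of an operator commuting with the family `π b` is invariant
under that family and nonzero, hence everything. -/
theorem exists_eq_smul_one_of_commute
    {W : Type*} [AddCommGroup W] [Module ℂ W] [FiniteDimensional ℂ W] [Nontrivial W]
    {A : Type*} (π : A → Module.End ℂ W)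
    (hirr : ∀ p : Submodule ℂ W, (∀ b : A, ∀ x ∈ p, π b x ∈ p) → p = ⊥ ∨ p = ⊤)
    (T : Module.End ℂ W) (hT : ∀ b, T * π b = π b * T) :
    ∃ z : ℂ, T = z • 1 := by
  obtain ⟨z, hz⟩ := Module.End.exists_eigenvalue T
  refine ⟨z, ?_⟩
  have htop : T.eigenspace z = ⊤ := by
    refine (hirr _ fun b x hx => ?_).resolve_left hz
    rw [Module.End.mem_eigenspace_iff] at hx ⊢
    rw [← Module.End.mul_apply, hT, Module.End.mul_apply, hx, map_smul]
  ext x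
  have hx : x ∈ T.eigenspace z := htop ▸ Submodule.mem_top
  simpa using Module.End.mem_eigenspace_iff.mp hx

/-- A scalar multiple of the identity that is an isometry is a phase. -/
theorem norm_eq_one_of_adjoint_mul_self
    {W : Type*} [NormedAddCommGroup W] [InnerProductSpace ℂ W]
    [FiniteDimensional ℂ W] [Nontrivial W] (z : ℂ)
    (h : LinearMap.adjoint (z • (1 : Module.End ℂ W)) * (z • (1 : Module.End ℂ W)) = 1) :
    ‖z‖ = 1 := by
  obtain ⟨x, hx⟩ := exists_ne (0 : W)
  have h1 : inner ℂ (z • x) (z • x) = inner ℂ x x := by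
    have h2 := congrArg (fun f : Module.End ℂ W => inner ℂ (f x) x) h
    rw [Module.End.mul_apply, LinearMap.adjoint_inner_left] at h2
    simpa using h2
  have h3 : ‖z • x‖ ^ 2 = ‖x‖ ^ 2 := by
    rw [← inner_self_eq_norm_sq (𝕜 := ℂ), ← inner_self_eq_norm_sq (𝕜 := ℂ), h1]
  have h4 : ‖z • x‖ = ‖x‖ := (sq_eq_sq₀ (norm_nonneg _) (norm_nonneg _)).mp h3
  rw [norm_smul] at h4
  exact mul_right_cancel₀ (norm_ne_zero_iff.mpr hx) (h4.trans (one_mul _).symm)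

/-- Projective translation-invariance part of the Template Correspondence
theorem: if the Heisenberg automorphism `γ` is invariant under the translation
automorphism `μ` (implemented on the representation space by the unitary `τ`),
and the unitary `R` intertwines `π` and `π ∘ γ`, then `τ R τ⁻¹ = e^{iθ} R`. -/
theorem intertwiner_projectively_translation_invariant
    {W : Type*} [NormedAddCommGroup W] [InnerProductSpace ℂ W]
    [FiniteDimensional ℂ W] [Nontrivial W]
    {A : Type*} [Ring A] [Algebra ℂ A]
    (π : A →ₐ[ℂ] Module.End ℂ W)
    (hirr : ∀ p : Submodule ℂ W, (∀ b : A, ∀ x ∈ p, π b x ∈ p) → p = ⊥ ∨ p = ⊤)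
    (γ μ : A ≃ₐ[ℂ] A)
    (hμγ : ∀ b : A, μ (γ (μ.symm b)) = γ b)
    (τ : Module.End ℂ W)
    (hτ : LinearMap.adjoint τ * τ = 1 ∧ τ * LinearMap.adjoint τ = 1)
    (hτπ : ∀ b : A, π (μ b) = τ * π b * LinearMap.adjoint τ)
    (R : Module.End ℂ W)
    (hR : LinearMap.adjoint R * R = 1 ∧ R * LinearMap.adjoint R = 1)
    (hint : ∀ b : A, LinearMap.adjoint R * π b * R = π (γ b)) :
    ∃ θ : ℝ, τ * R * LinearMap.adjoint τ = Complex.exp (θ * Complex.I) • R := by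
  have adj_mul (f g : Module.End ℂ W) :
      LinearMap.adjoint (f * g) = LinearMap.adjoint g * LinearMap.adjoint f :=
    LinearMap.adjoint_comp f g
  obtain ⟨hτ₁, hτ₂⟩ := hτ
  obtain ⟨hR₁, hR₂⟩ := hR
  set τ' := LinearMap.adjoint τ with hτ'
  set R' := LinearMap.adjoint R with hR'
  have hRπ (b : A) : R * π (γ b) = π b * R := by
    rw [← hint, ← mul_assoc, ← mul_assoc, hR₂, one_mul]
  have hR'π (b : A) : R' * π b = π (γ b) * R' := by
    rw [← hint, mul_assoc, hR₂, mul_one]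
  have hτ'π (b : A) : τ' * π (μ b) = π b * τ' := by
    rw [hτπ, ← mul_assoc, ← mul_assoc, hτ₁, one_mul]
  have hτπ' (b : A) : τ * π b = π (μ b) * τ := by
    rw [hτπ, mul_assoc, hτ₁, mul_one]
  have hS (b : A) : τ * R * τ' * π (γ b) = π b * (τ * R * τ') := by
    rw [← hμγ b, mul_assoc, hτ'π, ← mul_assoc, mul_assoc τ, hRπ, ← mul_assoc τ, hτπ',
      μ.apply_symm_apply]
    simp only [mul_assoc]
  obtain ⟨z, hz⟩ := exists_eq_smul_one_of_commute π hirr (τ * R * τ' * R') fun b => by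
    rw [mul_assoc _ R', hR'π, ← mul_assoc, hS, mul_assoc (π b)]
  have hSR : τ * R * τ' = z • R := by
    rw [← mul_one (τ * R * τ'), ← hR₁, ← mul_assoc, hz, smul_mul_assoc, one_mul]
  have hnorm : ‖z‖ = 1 := by
    apply norm_eq_one_of_adjoint_mul_self (W := W)
    rw [← hz]
    have cancel {f g : Module.End ℂ W} (h : f * g = 1) (k : Module.End ℂ W) :
        f * (g * k) = k := by rw [← mul_assoc, h, one_mul]
    simp only [adj_mul, hτ', hR', LinearMap.adjoint_adjoint, mul_assoc] at *
    rw [cancel hτ₁, cancel hR₁, cancel hτ₂, hR₂]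
  refine ⟨z.arg, ?_⟩
  have hexp := Complex.norm_mul_exp_arg_mul_I z
  rw [hnorm, Complex.ofReal_one, one_mul] at hexp
  rw [hexp, hSR]
end

section
/- Let W be a nontrivial finite-dimensional complex vector space, ι a nonempty finite index set, and for each i ∈ ι let D_i be a unital ℂ-subalgebra of End(W) (each containing the identity) such that: (i) elements of D_i and D_j commute whenever i ≠ j; (ii) each D_i is simple as a ring; and (iii) the ℂ-linear span of the set of products { ∏_{i∈ι} d_i : d_i ∈ D_i } equals End(W). Then there exist nontrivial finite-dimensional complex vector spaces V_i, i ∈ ι, and a linear isomorphism S : W → ⨂_{i∈ι} V_i such that for each i ∈ ι, S D_i S⁻¹ equals the subalgebra of End(⨂_{i∈ι} V_i) consisting of the operators ⨂_{j∈ι} f_j with f_i ∈ End(V_i) arbitrary and f_j = id_{V_j} for all j ≠ i. -/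
open scoped TensorProduct

/-!
Over `ℂ`, Wedderburn–Artin identifies each simple algebra `D i` with a full matrix algebra
`M_{n i}(ℂ)`, giving embeddings `φ i : M_{n i}(ℂ) → End W` with pairwise commuting ranges. Their
product `Φ(M) = ∏ i, φ i (M i)` is both multiplicative (by commutativity) and multilinear in `M`.

Expanding `1 = Φ(1)` along `1 = ∑ a, E_{aa}` in every factor shows that some rank-one product
`Φ(i ↦ E_{p i, p i})` is nonzero; let `v ≠ 0` be a vector in its image. Writing
`C_i(x) = x e_{p i}ᵀ` for the matrix whose column `p i` is `x` and whose other columns vanish, the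
map `T(⨂ x_i) = Φ(i ↦ C_i(x_i)) v` from `⨂ ℂ^{n i}` to `W` intertwines `⨂ M_i` with `Φ(M)`, since
`M C_i(x) = C_i(M x)`. It is

* injective, because applying `⨂ E_{p i, q i}` to a tensor extracts its `q`-th coordinate, so that
  `Φ(i ↦ E_{p i, q i}) (T x) = x_q • v`;
* surjective, because its range is stable under all `Φ(M)`, hence under `End W`, and contains `v`.

The inverse of `T` is the required isomorphism.
-/

/-- The tensor product of the matrix units `E_{p i, q i}` extracts the `q`-th coordinate. -/
lemma map_single_eq_coord {ι : Type*} [Fintype ι] {n : ι → ℕ}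
    (p q : ∀ i, Fin (n i)) (x : ⨂[ℂ] i, (Fin (n i) → ℂ)) :
    PiTensorProduct.map (fun i => Matrix.toLin' (Matrix.single (p i) (q i) (1 : ℂ))) x =
      (Basis.piTensorProduct fun i => Pi.basisFun ℂ (Fin (n i))).repr x q •
        PiTensorProduct.tprod ℂ fun i => (Pi.single (p i) 1 : Fin (n i) → ℂ) := by
  suffices h : PiTensorProduct.map
      (fun i => Matrix.toLin' (Matrix.single (p i) (q i) (1 : ℂ))) =
      ((Basis.piTensorProduct fun i => Pi.basisFun ℂ (Fin (n i))).coord q).smulRight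
        (PiTensorProduct.tprod ℂ fun i => (Pi.single (p i) 1 : Fin (n i) → ℂ)) from
    LinearMap.congr_fun h x
  refine PiTensorProduct.ext (MultilinearMap.ext fun x => ?_)
  have h : ∀ i, Matrix.toLin' (Matrix.single (p i) (q i) (1 : ℂ)) (x i) =
      x i (q i) • (Pi.single (p i) 1 : Fin (n i) → ℂ) := fun i => by
    ext a
    simp [Matrix.single_mulVec, Pi.single_apply, Function.update_apply]
  simp [h, MultilinearMap.map_smul_univ]

section CommutingMatrixAlgebras

variable {W : Type*} [AddCommGroup W] [Module ℂ W]
  {ι : Type*} [Fintype ι] [DecidableEq ι] {n : ι → ℕ}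

/-- The product `M ↦ ∏ i, φ i (M i)` of a family of algebra homomorphisms with pairwise commuting
ranges, as a monoid homomorphism. -/
noncomputable def commutingProductHom
    (φ : ∀ i, Matrix (Fin (n i)) (Fin (n i)) ℂ →ₐ[ℂ] Module.End ℂ W)
    (hφ : Pairwise fun i j => ∀ x y, Commute (φ i x) (φ j y)) :
    (∀ i, Matrix (Fin (n i)) (Fin (n i)) ℂ) →* Module.End ℂ W :=
  MonoidHom.noncommPiCoprod (fun i => ((φ i).toRingHom.toMonoidHom :
    Matrix (Fin (n i)) (Fin (n i)) ℂ →* Module.End ℂ W)) hφ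

lemma commutingProductHom_mulSingle
    (φ : ∀ i, Matrix (Fin (n i)) (Fin (n i)) ℂ →ₐ[ℂ] Module.End ℂ W)
    (hφ : Pairwise fun i j => ∀ x y, Commute (φ i x) (φ j y))
    (i : ι) (A : Matrix (Fin (n i)) (Fin (n i)) ℂ) :
    commutingProductHom φ hφ (Pi.mulSingle i A) = φ i A :=
  MonoidHom.noncommPiCoprod_mulSingle (fun i => ((φ i).toRingHom.toMonoidHom :
    Matrix (Fin (n i)) (Fin (n i)) ℂ →* Module.End ℂ W)) (hcomm := hφ) i A

lemma commutingProductHom_update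
    (φ : ∀ i, Matrix (Fin (n i)) (Fin (n i)) ℂ →ₐ[ℂ] Module.End ℂ W)
    (hφ : Pairwise fun i j => ∀ x y, Commute (φ i x) (φ j y))
    (M : ∀ i, Matrix (Fin (n i)) (Fin (n i)) ℂ) (i : ι) (A : Matrix (Fin (n i)) (Fin (n i)) ℂ) :
    commutingProductHom φ hφ (Function.update M i A) =
      commutingProductHom φ hφ (Function.update M i 1) * φ i A := by
  have h : Function.update M i A = Function.update M i 1 * Pi.mulSingle i A := by
    funext j
    by_cases hj : j = i
    · subst hj; simp
    · simp [hj]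
  rw [h, map_mul, commutingProductHom_mulSingle]

/-- `commutingProductHom` as a multilinear map. -/
noncomputable def commutingProduct
    (φ : ∀ i, Matrix (Fin (n i)) (Fin (n i)) ℂ →ₐ[ℂ] Module.End ℂ W)
    (hφ : Pairwise fun i j => ∀ x y, Commute (φ i x) (φ j y)) :
    MultilinearMap ℂ (fun i => Matrix (Fin (n i)) (Fin (n i)) ℂ) (Module.End ℂ W) :=
  MultilinearMap.mk' (fun M => commutingProductHom φ hφ M)
    (fun M i A B => by
      rw [commutingProductHom_update φ hφ M i (A + B), commutingProductHom_update φ hφ M i A,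
        commutingProductHom_update φ hφ M i B, map_add, mul_add])
    (fun M i c A => by
      rw [commutingProductHom_update φ hφ M i (c • A), commutingProductHom_update φ hφ M i A,
        map_smul, mul_smul_comm])

/-- The map `x ↦ x eₚᵀ`, the matrix whose `p`-th column is `x` and whose other
columns vanish, as a linear map in `x`. -/
noncomputable def columnMatrix {k : ℕ} (p : Fin k) :
    (Fin k → ℂ) →ₗ[ℂ] Matrix (Fin k) (Fin k) ℂ where
  toFun x := Matrix.vecMulVec x (Pi.single p 1)
  map_add' x y := Matrix.add_vecMulVec x y _
  map_smul' c x := Matrix.smul_vecMulVec c x _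

lemma mul_columnMatrix {k : ℕ} (p : Fin k) (A : Matrix (Fin k) (Fin k) ℂ) (x : Fin k → ℂ) :
    A * columnMatrix p x = columnMatrix p (A.mulVec x) :=
  Matrix.mul_vecMulVec _ _ _

lemma columnMatrix_single {k : ℕ} (p q : Fin k) :
    columnMatrix p (Pi.single q 1) = Matrix.single q p 1 :=
  (Matrix.single_eq_single_vecMulVec_single q p).symm

variable (φ : ∀ i, Matrix (Fin (n i)) (Fin (n i)) ℂ →ₐ[ℂ] Module.End ℂ W)
  (hφ : Pairwise fun i j => ∀ x y, Commute (φ i x) (φ j y))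

lemma commutingProduct_mul (M N : ∀ i, Matrix (Fin (n i)) (Fin (n i)) ℂ) :
    commutingProduct φ hφ (M * N) = commutingProduct φ hφ M * commutingProduct φ hφ N :=
  map_mul (commutingProductHom φ hφ) M N

lemma commutingProduct_one : commutingProduct φ hφ 1 = 1 :=
  map_one (commutingProductHom φ hφ)

lemma commutingProduct_mulSingle (i : ι) (A : Matrix (Fin (n i)) (Fin (n i)) ℂ) :
    commutingProduct φ hφ (Pi.mulSingle i A) = φ i A :=
  commutingProductHom_mulSingle φ hφ i A

lemma commutingProduct_eq_list_prod (M : ∀ i, Matrix (Fin (n i)) (Fin (n i)) ℂ) :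
    commutingProduct φ hφ M = (Finset.univ.toList.map fun i => φ i (M i)).prod := by
  have hc : ∀ s : Set ι, s.Pairwise (Function.onFun Commute fun i => φ i (M i)) :=
    fun s i _ j _ h => hφ h _ _
  rw [← Finset.noncommProd_toFinset Finset.univ.toList (fun i => φ i (M i)) (hc _)
    (Finset.nodup_toList _)]
  change Finset.univ.noncommProd (fun i => φ i (M i)) (hc _) = _
  exact Finset.noncommProd_congr (Finset.toList_toFinset _).symm (fun _ _ => rfl) _

/-- Some product of diagonal matrix units is nonzero, because all of them add up to `1`. -/
lemma exists_commutingProduct_single_ne_zero [Nontrivial W] :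
    ∃ p : ∀ i, Fin (n i), commutingProduct φ hφ (fun i => Matrix.single (p i) (p i) 1) ≠ 0 := by
  by_contra! h
  have h1 : commutingProduct φ hφ
      (fun i => ∑ a : Fin (n i), Matrix.single a a (1 : ℂ)) = 1 := by
    rw [← commutingProduct_one φ hφ]
    congr 1
    funext i
    exact Matrix.sum_single_one
  rw [MultilinearMap.map_sum, Finset.sum_eq_zero fun p _ => h p] at h1
  exact zero_ne_one h1

/-- The map `⨂ x_i ↦ (∏ i, φ i (x_i e_{p i}ᵀ)) v`. -/
noncomputable def tensorToSpace (p : ∀ i, Fin (n i)) (v : W) :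
    (⨂[ℂ] i, (Fin (n i) → ℂ)) →ₗ[ℂ] W :=
  PiTensorProduct.lift ((LinearMap.applyₗ v).compMultilinearMap
    ((commutingProduct φ hφ).compLinearMap fun i => columnMatrix (p i)))

lemma tensorToSpace_tprod (p : ∀ i, Fin (n i)) (v : W) (x : ∀ i, Fin (n i) → ℂ) :
    tensorToSpace φ hφ p v (PiTensorProduct.tprod ℂ x) =
      commutingProduct φ hφ (fun i => columnMatrix (p i) (x i)) v := by
  simp [tensorToSpace]

/-- `tensorToSpace` intertwines `⨂ M_i` with `∏ i, φ i (M i)`. -/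
lemma tensorToSpace_map (p : ∀ i, Fin (n i)) (v : W)
    (M : ∀ i, Matrix (Fin (n i)) (Fin (n i)) ℂ) (x : ⨂[ℂ] i, (Fin (n i) → ℂ)) :
    tensorToSpace φ hφ p v (PiTensorProduct.map (fun i => Matrix.toLin' (M i)) x) =
      commutingProduct φ hφ M (tensorToSpace φ hφ p v x) := by
  suffices h : tensorToSpace φ hφ p v ∘ₗ PiTensorProduct.map (fun i => Matrix.toLin' (M i)) =
      commutingProduct φ hφ M ∘ₗ tensorToSpace φ hφ p v from LinearMap.congr_fun h x
  refine PiTensorProduct.ext (MultilinearMap.ext fun x => ?_)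
  simp only [LinearMap.compMultilinearMap_apply, LinearMap.comp_apply, PiTensorProduct.map_tprod,
    tensorToSpace_tprod, Matrix.toLin'_apply, ← mul_columnMatrix]
  exact LinearMap.congr_fun (commutingProduct_mul φ hφ M fun i => columnMatrix (p i) (x i)) v

lemma tensorToSpace_bijective (p : ∀ i, Fin (n i)) (v : W) (hv : v ≠ 0)
    (hpv : commutingProduct φ hφ (fun i => Matrix.single (p i) (p i) 1) v = v)
    (hspan : Submodule.span ℂ (Set.range (commutingProduct φ hφ)) = ⊤) :
    Function.Bijective (tensorToSpace φ hφ p v) := by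
  have hTp : tensorToSpace φ hφ p v
      (PiTensorProduct.tprod ℂ fun i => (Pi.single (p i) 1 : Fin (n i) → ℂ)) = v := by
    simp only [tensorToSpace_tprod, columnMatrix_single, hpv]
  constructor
  · rw [injective_iff_map_eq_zero]
    intro x hx
    refine (Basis.piTensorProduct fun i => Pi.basisFun ℂ (Fin (n i))).ext_elem fun q => ?_
    have h := tensorToSpace_map φ hφ p v (fun i => Matrix.single (p i) (q i) 1) x
    rw [map_single_eq_coord, map_smul, hTp, hx, map_zero, smul_eq_zero] at h
    simpa using h.resolve_right hv
  -- The operators mapping `v` into the range form a subspace containing all `Φ(M)`.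
  · have hle : (⊤ : Submodule ℂ (Module.End ℂ W)) ≤
        (LinearMap.range (tensorToSpace φ hφ p v)).comap (LinearMap.applyₗ v) := by
      rw [← hspan, Submodule.span_le]
      rintro _ ⟨M, rfl⟩
      refine ⟨_, (tensorToSpace_map φ hφ p v M
        (PiTensorProduct.tprod ℂ fun i => (Pi.single (p i) 1 : Fin (n i) → ℂ))).trans ?_⟩
      rw [hTp]
      rfl
    intro w
    have : Nontrivial W := nontrivial_of_ne v 0 hv
    obtain ⟨g, hg⟩ := IsSimpleModule.toSpanSingleton_surjective (Module.End ℂ W) hv w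
    obtain ⟨x, hx⟩ := hle (Submodule.mem_top (x := g))
    exact ⟨x, hx.trans hg⟩

end CommutingMatrixAlgebras

/-- Finite-dimensional factorization underlying Theorem III.10: if the unital
subalgebras `D i` of `End W` pairwise commute, are simple rings, and the span
of their products is all of `End W`, then `W` factors as a tensor product
`⨂ᵢ Vᵢ` carrying each `D i` to `End (V i) ⊗ 1`. -/
theorem tensor_factorization_of_commuting_simple_subalgebras
    {W : Type*} [AddCommGroup W] [Module ℂ W] [FiniteDimensional ℂ W] [Nontrivial W]
    {ι : Type*} [Fintype ι] [Nonempty ι] [DecidableEq ι]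
    (D : ι → Subalgebra ℂ (Module.End ℂ W))
    (hcomm : ∀ i j, i ≠ j → ∀ x ∈ D i, ∀ y ∈ D j, Commute x y)
    (hsimple : ∀ i, IsSimpleRing (D i))
    (hspan : Submodule.span ℂ
      {g : Module.End ℂ W |
        ∃ d : ∀ _ : ι, Module.End ℂ W,
          (∀ i, d i ∈ D i) ∧ g = (Finset.univ.toList.map d).prod} = ⊤) :
    ∃ n : ι → ℕ, (∀ i, 0 < n i) ∧
      ∃ S : W ≃ₗ[ℂ] ⨂[ℂ] i, (Fin (n i) → ℂ),
        ∀ i,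
          (fun a : Module.End ℂ W =>
              (S.toLinearMap ∘ₗ a ∘ₗ S.symm.toLinearMap :
                Module.End ℂ (⨂[ℂ] i, (Fin (n i) → ℂ)))) '' (D i : Set (Module.End ℂ W))
          = Set.range (fun f : Module.End ℂ (Fin (n i) → ℂ) =>
              (PiTensorProduct.map
                (Function.update (fun j => (LinearMap.id : (Fin (n j) → ℂ) →ₗ[ℂ] (Fin (n j) → ℂ))) i f) :
                Module.End ℂ (⨂[ℂ] i, (Fin (n i) → ℂ)))) := by
  choose n hn e using fun i => IsSimpleRing.exists_algEquiv_matrix_of_isAlgClosed ℂ (D i)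
  let φ : ∀ i, Matrix (Fin (n i)) (Fin (n i)) ℂ →ₐ[ℂ] Module.End ℂ W :=
    fun i => (D i).val.comp ((e i).some.symm : _ →ₐ[ℂ] D i)
  have hφD : ∀ i a, a ∈ D i ↔ ∃ A, φ i A = a := fun i a =>
    ⟨fun ha => ⟨(e i).some ⟨a, ha⟩, by simp [φ]⟩, by
      rintro ⟨A, rfl⟩
      exact ((e i).some.symm A).2⟩
  have hφ : Pairwise fun i j => ∀ x y, Commute (φ i x) (φ j y) := fun i j hij x y =>
    hcomm i j hij _ ((hφD i _).2 ⟨x, rfl⟩) _ ((hφD j _).2 ⟨y, rfl⟩)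
  have hspan' : Submodule.span ℂ (Set.range (commutingProduct φ hφ)) = ⊤ := by
    rw [eq_top_iff, ← hspan]
    refine Submodule.span_mono ?_
    rintro _ ⟨d, hd, rfl⟩
    choose M hM using fun i => (hφD i (d i)).1 (hd i)
    exact ⟨M, by simp only [commutingProduct_eq_list_prod, hM]⟩
  obtain ⟨p, hp⟩ := exists_commutingProduct_single_ne_zero φ hφ
  obtain ⟨w, hw⟩ : ∃ w, commutingProduct φ hφ (fun i => Matrix.single (p i) (p i) 1) w ≠ 0 := by
    by_contra! h
    exact hp (LinearMap.ext h)
  -- The vector is fixed by the product of diagonal matrix units, which is idempotent.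
  have hbij := tensorToSpace_bijective φ hφ p _ hw (by
    rw [← Module.End.mul_apply, ← commutingProduct_mul]
    congr 2
    funext i
    simp) hspan'
  let T := LinearEquiv.ofBijective _ hbij
  refine ⟨n, fun i => (hn i).pos, T.symm, fun i => ?_⟩
  have hconj : ∀ A : Matrix (Fin (n i)) (Fin (n i)) ℂ,
      T.symm.toLinearMap ∘ₗ φ i A ∘ₗ T.symm.symm.toLinearMap =
        PiTensorProduct.map (Function.update
          (fun j => (LinearMap.id : (Fin (n j) → ℂ) →ₗ[ℂ] (Fin (n j) → ℂ))) i
          (Matrix.toLin' A)) := by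
    intro A
    have hupd : Function.update
        (fun j => (LinearMap.id : (Fin (n j) → ℂ) →ₗ[ℂ] (Fin (n j) → ℂ))) i (Matrix.toLin' A) =
        fun j => Matrix.toLin'
          ((Pi.mulSingle i A : ∀ j, Matrix (Fin (n j)) (Fin (n j)) ℂ) j) := by
      funext j
      by_cases hj : j = i
      · subst hj; simp
      · simp [hj]
    rw [hupd]
    refine LinearMap.ext fun x => ?_
    rw [LinearMap.comp_apply, LinearEquiv.coe_coe, LinearEquiv.symm_apply_eq]
    refine Eq.trans ?_ (tensorToSpace_map φ hφ p _ (Pi.mulSingle i A) x).symm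
    rw [commutingProduct_mulSingle]
    rfl
  ext f
  constructor
  · rintro ⟨a, ha, rfl⟩
    obtain ⟨A, rfl⟩ := (hφD i a).1 ha
    exact ⟨Matrix.toLin' A, (hconj A).symm⟩
  · rintro ⟨g, rfl⟩
    refine ⟨φ i (LinearMap.toMatrix' g), (hφD i _).2 ⟨_, rfl⟩, (hconj _).trans ?_⟩
    rw [Matrix.toLin'_toMatrix']
end
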